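/- arXiv:1401.1649 — 2 statements merged into one kernel-verified Lean document; each statement's English description precedes it below -/
import Mathlib

section
/- Let Ω ⊆ ℝ^m be a bounded open set, let Ω₁ ⊆ Ω be an open convex set with cl(Ω₁) ⊆ Ω, and set Ω₂ = Ω \ cl(Ω₁). Let A ⊆ Ω₁ ∪ Ω₂ be a finite nonempty set, let A₁ = A ∩ Ω₁ and A₂ = A ∩ Ω₂, and let 0 < μ₁ ≤ 1 satisfy #A₁ ≥ μ₁ · #A. Then there exists a constant κ_α > 0 depending only on α such that ℒ^α_brbd(A, ∂Ω) ≥ ℒ^α_brbd(A₁, ∂Ω₁) + ℒ^α_brbd(A₂, ∂Ω₂) + κ_α · μ₁ · (#A)^α · dist(Ω₁, ∂Ω). -/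
/-! The constant `κ = α` works. Let `G` connect `A` to `∂Ω`. By Kirchhoff's law every point of
`A` emits a unit flow inside `G` which ends on `∂Ω` and uses each edge at most once; peeling such
flows off one at a time yields flows `n₁`, `n₂` with sources `A₁`, `A₂`, with `n₁ + n₂ ≤ d` and
`n₁ + n₂ ≤ #A` on every edge (`exists_subflow`).

Each edge `[u, v]` meeting `Ω₁` is cut into a middle part `[x, y]` attributed to `Ω₁` and two outer
parts `[u, x]`, `[y, v]`, where `x = u` if `u ∈ Ω₁` and `x ∈ ∂Ω₁` otherwise, and similarly for `y`;
an edge missing `Ω₁` is entirely an outer part (`exists_clip`). The middle parts with weight `n₁`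
connect `A₁` to `∂Ω₁`, and the outer parts with weight `n₂` connect `A₂` to `∂Ω₂`; merging parallel
arrows and cancelling opposite ones turns these families into graphs at no extra cost
(`Lbrbd_le_of_flow`). Convexity of `Ω₁` is used only to know that `∂Ω₁` lies in the closure of
`Ω₂`.

On the outer parts the flow `n₁` has been discarded, which by concavity of `x ^ α` saves at least
`α (#A) ^ (α - 1) n₁` per unit length (`rpow_saving`). The total `n₁`-weighted outer length is at
least `#A₁ · dist(Ω₁, ∂Ω)`: the potential `max (dist(Ω₁, ∂Ω) - dist(·, Ω₁)) 0` is `1`-Lipschitz,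
constant on `closure Ω₁` and zero on `∂Ω`, and `flow_potential` evaluates its total drop along
`n₁`. Finally `#A₁ ≥ μ₁ #A`. -/


open scoped ENNReal
open scoped Classical

noncomputable section

/-- Points of `ℝ^m` with the Euclidean norm. -/
abbrev Pt (m : ℕ) : Type := EuclideanSpace ℝ (Fin m)

/-- A finite weighted directed graph in `ℝ^m`: a finite vertex set, a finite set of
directed segments `e = (e⁻, e⁺)`, and a multiplicity function. -/
structure BrGraph (m : ℕ) where
  V : Finset (Pt m)
  E : Finset (Pt m × Pt m)
  d : Pt m × Pt m → ℕ

/-- `G` is a weighted directed graph connecting the finite set `A` to the boundary of `Ω`: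
`A ⊆ V(G) ⊆ cl Ω`; edges have distinct endpoints in `V(G)`; no edge appears with both
orientations; multiplicities are `≥ 1`; and the Kirchhoff balance law holds at every
vertex not on `∂Ω`. -/
def BrGraph.IsConn {m : ℕ} (G : BrGraph m) (A : Finset (Pt m)) (Ω : Set (Pt m)) : Prop :=
  A ⊆ G.V ∧
  (G.V : Set (Pt m)) ⊆ closure Ω ∧
  (∀ e ∈ G.E, e.1 ∈ G.V ∧ e.2 ∈ G.V ∧ e.1 ≠ e.2) ∧
  (∀ e ∈ G.E, (e.2, e.1) ∉ G.E) ∧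
  (∀ e ∈ G.E, 1 ≤ G.d e) ∧
  ∀ a ∈ G.V, a ∉ frontier Ω →
    (∑ e ∈ G.E.filter (fun e => e.1 = a), G.d e) =
      (∑ e ∈ G.E.filter (fun e => e.2 = a), G.d e) + (if a ∈ A then 1 else 0)

/-- The cost `W_α(G) = ∑_{e ∈ E(G)} d(e)^α · ℓ(e)` where `ℓ(e) = |e⁺ − e⁻|`. -/
def BrGraph.cost {m : ℕ} (α : ℝ) (G : BrGraph m) : ℝ :=
  ∑ e ∈ G.E, (G.d e : ℝ) ^ α * ‖e.2 - e.1‖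

/-- The branched connection `ℒ^α_brbd(A, ∂Ω) = inf { W_α(G) : G ∈ 𝒢(A, ∂Ω) }`
(valued in `[0, ∞]`, equal to `∞` if no connecting graph exists). -/
def Lbrbd (m : ℕ) (α : ℝ) (A : Finset (Pt m)) (Ω : Set (Pt m)) : ℝ≥0∞ :=
  ⨅ (G : BrGraph m) (_ : G.IsConn A Ω), ENNReal.ofReal (G.cost α)

/-- The (infimal) distance between two subsets of a pseudo-emetric space, as a real
number. -/
def setDist {X : Type*} [PseudoEMetricSpace X] (s t : Set X) : ℝ :=
  (⨅ x ∈ s, EMetric.infEdist x t).toReal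

/-! ### Balanced integer flows -/

/-- The family `i ∈ I` of arrows `s i → t i` with multiplicities `n i` satisfies Kirchhoff's
law at `a` with unit sources at the points of `A`. Arrows are indexed by an arbitrary type, so
that repeated, opposite and degenerate arrows are all allowed. -/
def Bal {ι X : Type*} [DecidableEq X] (I : Finset ι) (s t : ι → X) (n : ι → ℕ) (A : Finset X) (a : X) : Prop :=
  (∑ i ∈ I, if s i = a then n i else 0) =
    (∑ i ∈ I, if t i = a then n i else 0) + (if a ∈ A then 1 else 0)

section Flow

variable {ι X : Type*} [DecidableEq X] {I : Finset ι} {s t : ι → X} {n p : ι → ℕ} {A A' : Finset X} {a : X}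

lemma Bal.add (h : Bal I s t n A a) (h' : Bal I s t p A' a) (hd : Disjoint A A') :
    Bal I s t (fun i => n i + p i) (A ∪ A') a := by
  unfold Bal at *
  have e : ∀ r : ι → X, (∑ i ∈ I, if r i = a then n i + p i else 0) =
      (∑ i ∈ I, if r i = a then n i else 0) + ∑ i ∈ I, if r i = a then p i else 0 := by
    intro r
    rw [← Finset.sum_add_distrib]
    exact Finset.sum_congr rfl fun i _ => by split_ifs <;> simp
  have e2 : (if a ∈ A ∪ A' then 1 else 0) =
      (if a ∈ A then 1 else 0) + (if a ∈ A' then 1 else 0) := by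
    by_cases h1 : a ∈ A
    · have := Finset.disjoint_left.mp hd h1
      simp [h1, this]
    · simp [h1]
  rw [e, e, e2, h, h']
  ring

lemma Bal.sub (h : Bal I s t n A a) (h' : Bal I s t p A' a) (hA : A' ⊆ A)
    (hp : ∀ i ∈ I, p i ≤ n i) :
    Bal I s t (fun i => n i - p i) (A \ A') a := by
  unfold Bal at *
  have e : ∀ r : ι → X, (∑ i ∈ I, if r i = a then n i - p i else 0) +
      (∑ i ∈ I, if r i = a then p i else 0) = ∑ i ∈ I, if r i = a then n i else 0 := by
    intro r
    rw [← Finset.sum_add_distrib]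
    refine Finset.sum_congr rfl fun i hi => ?_
    have := hp i hi
    split_ifs <;> omega
  have e1 := e s
  have e2 := e t
  have e3 : (if a ∈ A \ A' then 1 else 0) + (if a ∈ A' then 1 else 0) =
      (if a ∈ A then 1 else 0) := by
    by_cases h1 : a ∈ A'
    · simp [h1, hA h1]
    · simp [h1]
  beta_reduce
  omega

/-- Summation by parts: a flow balanced off `B` with sources `A` transports a potential `χ`
vanishing on `B` by exactly its total value on the sources. -/
lemma flow_potential {B : Set X} (hn : ∀ a ∉ B, Bal I s t n A a) (χ : X → ℝ)
    (hχ : ∀ a ∈ B, χ a = 0) :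
    ∑ i ∈ I, (n i : ℝ) * (χ (s i) - χ (t i)) = ∑ a ∈ A, χ a := by
  set V : Finset X := A ∪ (I.image s ∪ I.image t) with hV
  have key : ∀ r : ι → X, (∀ i ∈ I, r i ∈ V) →
      ∑ i ∈ I, (n i : ℝ) * χ (r i) =
        ∑ a ∈ V, χ a * ((∑ i ∈ I, if r i = a then n i else 0 : ℕ) : ℝ) := by
    intro r hr
    simp_rw [Nat.cast_sum, Finset.mul_sum]
    rw [Finset.sum_comm]
    refine Finset.sum_congr rfl fun i hi => ?_
    rw [Finset.sum_eq_single (r i)]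
    · simp [mul_comm]
    · intro b _ hb
      simp [hb.symm]
    · exact fun h => absurd (hr i hi) h
  have hs : ∀ i ∈ I, s i ∈ V := fun i hi => by
    simp only [hV, Finset.mem_union, Finset.mem_image]
    exact Or.inr (Or.inl ⟨i, hi, rfl⟩)
  have ht : ∀ i ∈ I, t i ∈ V := fun i hi => by
    simp only [hV, Finset.mem_union, Finset.mem_image]
    exact Or.inr (Or.inr ⟨i, hi, rfl⟩)
  simp_rw [mul_sub]
  rw [Finset.sum_sub_distrib, key s hs, key t ht, ← Finset.sum_sub_distrib]
  have : ∑ a ∈ A, χ a = ∑ a ∈ V, if a ∈ A then χ a else 0 := by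
    rw [← Finset.sum_filter]
    congr 1
    ext x
    simp [hV]
  rw [this]
  refine Finset.sum_congr rfl fun a _ => ?_
  by_cases hB : a ∈ B
  · simp [hχ a hB]
  · rw [hn a hB]
    push_cast
    split_ifs <;> ring

/-- The points from which the target set `B` can be reached in at most `k` arrows of positive
multiplicity. -/
def reachLayer (I : Finset ι) (s t : ι → X) (n : ι → ℕ) (B : Set X) : ℕ → Set X
  | 0 => B
  | k + 1 => reachLayer I s t n B k ∪
      {x | ∃ i ∈ I, 0 < n i ∧ s i = x ∧ t i ∈ reachLayer I s t n B k}

/-- Points of a layer are joined to `B` by a unit flow using each arrow at most once. The last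
condition on the sources is what keeps the new arrow distinct from the old ones in the
induction. -/
lemma exists_unit_of_layer (B : Set X) (k : ℕ) :
    ∀ x ∈ reachLayer I s t n B k, ∃ p : ι → ℕ,
      (∀ i ∈ I, p i ≤ 1 ∧ p i ≤ n i) ∧
      (∀ i ∈ I, p i ≠ 0 → s i ∈ reachLayer I s t n B k) ∧
      ∀ a ∉ B, Bal I s t p {x} a := by
  induction k with
  | zero =>
    intro x hx
    refine ⟨fun _ => 0, by simp, by simp, fun a ha => ?_⟩
    have : a ≠ x := fun h => ha (h ▸ hx)
    simp [Bal, this]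
  | succ k ih =>
    intro x hx
    by_cases hxk : x ∈ reachLayer I s t n B k
    · obtain ⟨p, h1, h2, h3⟩ := ih x hxk
      exact ⟨p, h1, fun i hi h => Or.inl (h2 i hi h), h3⟩
    · obtain ⟨i₀, hi₀, hn, hs, ht⟩ := hx.resolve_left hxk
      obtain ⟨p, h1, h2, h3⟩ := ih _ ht
      have hp0 : p i₀ = 0 := by
        by_contra h
        exact hxk (hs ▸ h2 i₀ hi₀ h)
      refine ⟨fun i => p i + if i = i₀ then 1 else 0, ?_, ?_, ?_⟩
      · intro i hi
        by_cases h : i = i₀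
        · subst h
          simp only [hp0, if_true]
          omega
        · simpa [h] using h1 i hi
      · intro i hi h
        by_cases h' : i = i₀
        · subst h'
          exact Or.inr ⟨i, hi, hn, rfl, ht⟩
        · exact Or.inl (h2 i hi (by simpa [h'] using h))
      · intro a ha
        have e : ∀ r : ι → X, (∑ i ∈ I, if r i = a then p i + (if i = i₀ then 1 else 0) else 0) =
            (∑ i ∈ I, if r i = a then p i else 0) + if r i₀ = a then 1 else 0 := by
          intro r
          have : (if r i₀ = a then 1 else 0) =
              ∑ i ∈ I, if i = i₀ then (if r i = a then 1 else 0) else 0 := by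
            rw [Finset.sum_ite_eq' I i₀ (fun i => if r i = a then 1 else 0), if_pos hi₀]
          rw [this, ← Finset.sum_add_distrib]
          exact Finset.sum_congr rfl fun i _ => by split_ifs <;> simp
        have := h3 a ha
        unfold Bal at *
        rw [e, e, this]
        simp only [Finset.mem_singleton, hs, eq_comm (a := a)]

/-- Every source of a balanced flow emits a unit flow to `B` which uses each arrow at most once.
Otherwise the set of points which cannot reach `B` would contain a source, and no flow would
leave it. -/
lemma exists_unit {B : Set X} (hn : ∀ a ∉ B, Bal I s t n A a) (ha : a ∈ A) :
    ∃ p : ι → ℕ, (∀ i ∈ I, p i ≤ 1 ∧ p i ≤ n i) ∧ ∀ b ∉ B, Bal I s t p {a} b := by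
  suffices h : ∃ k, a ∈ reachLayer I s t n B k by
    obtain ⟨k, hk⟩ := h
    obtain ⟨p, h1, -, h3⟩ := exists_unit_of_layer B k a hk
    exact ⟨p, h1, h3⟩
  by_contra hcon
  set U : Set X := {x | ∃ k, x ∈ reachLayer I s t n B k} with hU
  have haU : a ∉ U := hcon
  have hpot := flow_potential hn (fun x => if x ∈ U then (0 : ℝ) else 1)
    (fun b hb => if_pos ⟨0, hb⟩)
  have hle : ∑ i ∈ I, (n i : ℝ) * ((if s i ∈ U then (0 : ℝ) else 1) -
      (if t i ∈ U then (0 : ℝ) else 1)) ≤ 0 := by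
    refine Finset.sum_nonpos fun i hi => ?_
    rcases Nat.eq_zero_or_pos (n i) with h0 | h0
    · simp [h0]
    · refine mul_nonpos_of_nonneg_of_nonpos (Nat.cast_nonneg _) ?_
      by_cases ht : t i ∈ U
      · have hs : s i ∈ U := by
          obtain ⟨k, hk⟩ := ht
          exact ⟨k + 1, Or.inr ⟨i, hi, h0, rfl, hk⟩⟩
        simp [hs, ht]
      · simp only [ht, if_false]
        split_ifs <;> norm_num
  have hge : (1 : ℝ) ≤ ∑ x ∈ A, if x ∈ U then (0 : ℝ) else 1 := by
    have := Finset.single_le_sum (f := fun x => if x ∈ U then (0 : ℝ) else 1)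
      (fun x _ => by positivity) ha
    simpa [haU] using this
  linarith

/-- A balanced flow with sources `A` contains, for every `A' ⊆ A`, a balanced flow with sources
`A'` whose multiplicities are at most `#A'`. -/
lemma exists_subflow {B : Set X} (hn : ∀ a ∉ B, Bal I s t n A a) :
    ∀ A' ⊆ A, ∃ p : ι → ℕ, (∀ i ∈ I, p i ≤ A'.card ∧ p i ≤ n i) ∧ ∀ b ∉ B, Bal I s t p A' b := by
  intro A'
  induction A' using Finset.induction_on with
  | empty => exact fun _ => ⟨fun _ => 0, by simp, by simp [Bal]⟩
  | insert x A' hx ih =>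
    intro hA
    obtain ⟨p, hp, hpb⟩ := ih ((Finset.subset_insert _ _).trans hA)
    have hsub : ∀ b ∉ B, Bal I s t (fun i => n i - p i) (A \ A') b := fun b hb =>
      (hn b hb).sub (hpb b hb) ((Finset.subset_insert _ _).trans hA) fun i hi => (hp i hi).2
    obtain ⟨q, hq, hqb⟩ := exists_unit hsub
      (Finset.mem_sdiff.mpr ⟨hA (Finset.mem_insert_self _ _), hx⟩)
    refine ⟨fun i => q i + p i, fun i hi => ?_, fun b hb => ?_⟩
    · have h1 := hp i hi
      have h2 := hq i hi
      rw [Finset.card_insert_of_notMem hx]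
      beta_reduce at *
      omega
    · rw [Finset.insert_eq]
      exact (hqb b hb).add (hpb b hb) (by simpa using hx)

end Flow

/-! ### From families of arrows to graphs -/

lemma rpow_sum_le {ι : Type*} (I : Finset ι) (n : ι → ℕ) {α : ℝ} (h0 : 0 < α) (h1 : α ≤ 1) :
    ((∑ i ∈ I, n i : ℕ) : ℝ) ^ α ≤ ∑ i ∈ I, (n i : ℝ) ^ α := by
  induction I using Finset.induction_on with
  | empty => simp [Real.zero_rpow h0.ne']
  | insert x I hx ih =>
    rw [Finset.sum_insert hx, Finset.sum_insert hx, Nat.cast_add]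
    have := Real.rpow_add_le_add_rpow (Nat.cast_nonneg (n x) : (0 : ℝ) ≤ n x)
      (Nat.cast_nonneg (∑ i ∈ I, n i)) h0.le h1
    linarith

/-- A balanced family of arrows bounds the branched connection by its cost. Parallel arrows are
merged, which does not increase the cost as `x ↦ x ^ α` is subadditive; opposite arrows are
cancelled, and degenerate ones disappear. -/
lemma Lbrbd_le_of_flow {ι : Type*} {m : ℕ} {α : ℝ} (h0 : 0 < α) (h1 : α ≤ 1)
    {Ω : Set (Pt m)} (hΩ : IsOpen Ω) (A : Finset (Pt m)) (hA : (A : Set (Pt m)) ⊆ Ω)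
    (I : Finset ι) (s t : ι → Pt m) (n : ι → ℕ)
    (hcl : ∀ i ∈ I, s i ≠ t i → s i ∈ closure Ω ∧ t i ∈ closure Ω)
    (hbal : ∀ a ∈ Ω, Bal I s t n A a) :
    Lbrbd m α A Ω ≤ ENNReal.ofReal (∑ i ∈ I, (n i : ℝ) ^ α * ‖t i - s i‖) := by
  set P : Finset (Pt m × Pt m) := I.image fun i => (s i, t i) with hP
  set D : Pt m × Pt m → ℕ := fun e => ∑ i ∈ I with (s i, t i) = e, n i with hD
  set d : Pt m × Pt m → ℕ := fun e => D e - D e.swap with hd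
  set E := P.filter (fun e => 0 < d e) with hE
  have hDP : ∀ e, e ∉ P → D e = 0 := by
    intro e he
    refine Finset.sum_eq_zero fun i hi => ?_
    rw [Finset.mem_filter] at hi
    exact absurd (Finset.mem_image.mpr ⟨i, hi.1, hi.2⟩) he
  have hEne : ∀ e ∈ E, e.1 ≠ e.2 := by
    rintro ⟨x, y⟩ he hxy
    have := (Finset.mem_filter.mp he).2
    simp only at hxy
    subst hxy
    simp [hd] at this
  have hEcl : ∀ e ∈ E, e.1 ∈ closure Ω ∧ e.2 ∈ closure Ω := by
    intro e he
    have hne := hEne e he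
    obtain ⟨i, hi, rfl⟩ := Finset.mem_image.mp (Finset.mem_filter.mp he).1
    exact hcl i hi hne
  set V := A ∪ (E.image Prod.fst ∪ E.image Prod.snd) with hV
  let G : BrGraph m := ⟨V, E, d⟩
  have hG : G.IsConn A Ω := by
    refine ⟨Finset.subset_union_left, ?_, ?_, ?_, ?_, ?_⟩
    · intro x hx
      simp only [G, hV, Finset.coe_union, Finset.coe_image, Set.mem_union, Set.mem_image,
        Finset.mem_coe] at hx
      rcases hx with hx | ⟨e, he, rfl⟩ | ⟨e, he, rfl⟩
      · exact subset_closure (hA hx)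
      · exact (hEcl e he).1
      · exact (hEcl e he).2
    · intro e he
      refine ⟨?_, ?_, hEne e he⟩
      · exact Finset.mem_union_right _ (Finset.mem_union_left _ (Finset.mem_image_of_mem _ he))
      · exact Finset.mem_union_right _ (Finset.mem_union_right _ (Finset.mem_image_of_mem _ he))
    · intro e he he'
      have h1 := (Finset.mem_filter.mp he).2
      have h2 := (Finset.mem_filter.mp he').2
      obtain ⟨u, v⟩ := e
      simp only [hd, Prod.swap_prod_mk] at h1 h2
      omega
    · exact fun e he => (Finset.mem_filter.mp he).2
    · intro a haV haf
      have haΩ : a ∈ Ω := by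
        have hac : a ∈ closure Ω := by
          simp only [G, hV, Finset.mem_union, Finset.mem_image] at haV
          rcases haV with hx | ⟨e, he, rfl⟩ | ⟨e, he, rfl⟩
          · exact subset_closure (hA hx)
          · exact (hEcl e he).1
          · exact (hEcl e he).2
        rw [hΩ.frontier_eq] at haf
        by_contra h
        exact haf ⟨hac, h⟩
      have hb := hbal a haΩ
      set Q := P ∪ P.image Prod.swap with hQ
      have hQswap : ∀ e ∈ Q, e.swap ∈ Q := by
        intro e he
        simp only [hQ, Finset.mem_union, Finset.mem_image] at he ⊢
        rcases he with he | ⟨e', he, rfl⟩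
        · exact Or.inr ⟨e, he, rfl⟩
        · exact Or.inl (by simpa using he)
      have hswap : ∀ f : Pt m × Pt m → ℕ, ∑ e ∈ Q, f e = ∑ e ∈ Q, f e.swap := fun f =>
        Finset.sum_nbij' Prod.swap Prod.swap hQswap hQswap (by simp) (by simp) (by simp)
      -- `M` is the part of the multiplicities removed by cancelling opposite arrows.
      set M : Pt m × Pt m → ℕ := fun e => min (D e) (D e.swap) with hM
      have hdM : ∀ e, d e + M e = D e := fun e => by simp only [hd, hM]; omega
      have hMs : ∀ e, M e.swap = M e := fun e => by simp [hM, min_comm]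
      have hd0 : ∀ e, e ∉ E → d e = 0 := by
        intro e he
        by_contra hne
        refine he (Finset.mem_filter.mpr ⟨?_, Nat.pos_of_ne_zero hne⟩)
        by_contra heP
        exact hne (by simp [hd, hDP e heP])
      have hEQ : E ⊆ Q := (Finset.filter_subset _ _).trans Finset.subset_union_left
      have hEsum : ∀ f : Pt m × Pt m → Pt m, ∑ e ∈ E with f e = a, d e =
          ∑ e ∈ Q, if f e = a then d e else 0 := by
        intro f
        rw [Finset.sum_filter]
        exact Finset.sum_subset hEQ fun e _ he => by simp [hd0 e he]
      have hsplit : ∀ f : Pt m × Pt m → Pt m, (∑ e ∈ Q, if f e = a then d e else 0) +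
          (∑ e ∈ Q, if f e = a then M e else 0) = ∑ e ∈ Q, if f e = a then D e else 0 := by
        intro f
        rw [← Finset.sum_add_distrib]
        refine Finset.sum_congr rfl fun e _ => ?_
        have := hdM e
        split_ifs <;> omega
      have hDsum : ∀ f : Pt m × Pt m → Pt m, (∑ e ∈ Q, if f e = a then D e else 0) =
          ∑ i ∈ I, if f (s i, t i) = a then n i else 0 := by
        intro f
        have hmap : ∀ i ∈ I, (s i, t i) ∈ Q := fun i hi =>
          Finset.mem_union_left _ (Finset.mem_image_of_mem _ hi)
        rw [← Finset.sum_fiberwise_of_maps_to hmap]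
        refine Finset.sum_congr rfl fun e _ => ?_
        by_cases hfe : f e = a
        · rw [if_pos hfe]
          refine Finset.sum_congr rfl fun i hi => ?_
          rw [(Finset.mem_filter.mp hi).2, if_pos hfe]
        · rw [if_neg hfe]
          refine (Finset.sum_eq_zero fun i hi => ?_).symm
          rw [(Finset.mem_filter.mp hi).2, if_neg hfe]
      have hMsum : (∑ e ∈ Q, if e.1 = a then M e else 0) =
          ∑ e ∈ Q, if e.2 = a then M e else 0 := by
        rw [hswap]
        exact Finset.sum_congr rfl fun e _ => by simp [hMs]
      have e1 := hsplit Prod.fst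
      have e2 := hsplit Prod.snd
      rw [hDsum, ← hEsum] at e1 e2
      unfold Bal at hb
      simp only [G]
      simp only at e1 e2
      omega
  refine (iInf₂_le G hG).trans (ENNReal.ofReal_le_ofReal ?_)
  have hmap : ∀ i ∈ I, (s i, t i) ∈ P := fun i hi => Finset.mem_image_of_mem _ hi
  rw [← Finset.sum_fiberwise_of_maps_to hmap]
  unfold BrGraph.cost
  calc ∑ e ∈ E, (d e : ℝ) ^ α * ‖e.2 - e.1‖
      ≤ ∑ e ∈ P, (d e : ℝ) ^ α * ‖e.2 - e.1‖ :=
        Finset.sum_le_sum_of_subset_of_nonneg (Finset.filter_subset _ _)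
          fun e _ _ => by positivity
    _ ≤ _ := by
        refine Finset.sum_le_sum fun e _ => ?_
        have hdD : (d e : ℝ) ^ α ≤ (D e : ℝ) ^ α :=
          Real.rpow_le_rpow (by positivity) (by exact_mod_cast Nat.sub_le _ _) h0.le
        calc (d e : ℝ) ^ α * ‖e.2 - e.1‖
            ≤ (∑ i ∈ I with (s i, t i) = e, (n i : ℝ) ^ α) * ‖e.2 - e.1‖ :=
              mul_le_mul_of_nonneg_right (hdD.trans (rpow_sum_le _ _ h0 h1)) (norm_nonneg _)
          _ = _ := by
              rw [Finset.sum_mul]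
              refine Finset.sum_congr rfl fun i hi => ?_
              rw [← (Finset.mem_filter.mp hi).2]

/-! ### Clipping a segment -/

/-- On the segment from `u` to a point `w` of the open set `C` there is a point `x ∈ closure C`
which is `u` if `u ∈ C`, and lies outside `C` otherwise. -/
lemma exists_entry {m : ℕ} {C : Set (Pt m)} (hC : IsOpen C) (u w : Pt m) (hw : w ∈ C) :
    ∃ x ∈ closure C, dist u x + dist x w = dist u w ∧ ∀ a ∈ C, x = a ↔ u = a := by
  by_cases hu : u ∈ C
  · exact ⟨u, subset_closure hu, by simp, fun _ _ => Iff.rfl⟩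
  · have hfr : ∃ x ∈ segment ℝ u w, x ∈ closure C ∧ x ∉ C := by
      by_contra! hno
      have hcov : segment ℝ u w ⊆ C ∪ (closure C)ᶜ := fun x hx => by
        by_cases h : x ∈ closure C
        · exact Or.inl (hno x hx h)
        · exact Or.inr h
      obtain ⟨x, -, hxC, hxK⟩ := (convex_segment u w).isPreconnected _ _ hC
        isClosed_closure.isOpen_compl hcov ⟨w, right_mem_segment ℝ u w, hw⟩
        ⟨u, left_mem_segment ℝ u w, fun h => hu (hno u (left_mem_segment ℝ u w) h)⟩
      exact hxK (subset_closure hxC)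
    obtain ⟨x, hxs, hxf⟩ := hfr
    exact ⟨x, hxf.1, dist_add_dist_of_mem_segment hxs, fun a ha =>
      ⟨fun h => absurd (h ▸ ha) hxf.2, fun h => absurd (h ▸ ha) hu⟩⟩

/-- A segment `[u, v]` is cut into `[u, x]`, `[x, y]`, `[y, v]`, where `[x, y]` is the part
attributed to the open set `C`; if the segment misses `C` then `x = y = v`. -/
lemma exists_clip {m : ℕ} {C : Set (Pt m)} (hC : IsOpen C) (u v : Pt m) :
    ∃ x y : Pt m, ‖x - u‖ + ‖y - x‖ + ‖v - y‖ ≤ ‖v - u‖ ∧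
      (∀ a ∈ C, x = a ↔ u = a) ∧ (∀ a ∈ C, y = a ↔ v = a) ∧
      ((x ∈ closure C ∧ y ∈ closure C) ∨ (x = v ∧ y = v)) := by
  by_cases h : ∃ w ∈ segment ℝ u v, w ∈ C
  · obtain ⟨w, hws, hw⟩ := h
    obtain ⟨x, hx, hxd, hxa⟩ := exists_entry hC u w hw
    obtain ⟨y, hy, hyd, hya⟩ := exists_entry hC v w hw
    refine ⟨x, y, ?_, hxa, hya, Or.inl ⟨hx, hy⟩⟩
    have h1 := dist_add_dist_of_mem_segment hws
    have h2 := dist_triangle x w y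
    simp only [← dist_eq_norm]
    rw [dist_comm x u, dist_comm y x, dist_comm v u]
    rw [dist_comm y w, dist_comm v w] at hyd
    linarith
  · push Not at h
    have hu := h u (left_mem_segment ℝ u v)
    have hv := h v (right_mem_segment ℝ u v)
    exact ⟨v, v, by simp, fun a ha => ⟨fun h => absurd (h ▸ ha) hv, fun h => absurd (h ▸ ha) hu⟩,
      fun _ _ => Iff.rfl, Or.inr ⟨rfl, rfl⟩⟩

/-! ### Distance, topology and concavity -/

lemma setDist_le_infDist {m : ℕ} {C F : Set (Pt m)} (hC : C.Nonempty) {a : Pt m} (ha : a ∈ F) :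
    setDist C F ≤ Metric.infDist a C := by
  rw [Metric.le_infDist hC]
  intro x hx
  have h : (⨅ x ∈ C, Metric.infEDist x F) ≤ edist x a :=
    (iInf₂_le x hx).trans (Metric.infEDist_le_edist_of_mem ha)
  unfold setDist
  rw [dist_comm, dist_edist]
  exact ENNReal.toReal_mono (edist_ne_top _ _) h

/-- Convexity makes `C` the interior of its closure, so that points of `∂C` are limits of points
outside `closure C`. -/
lemma mem_closure_outer {m : ℕ} {Ω C : Set (Pt m)} (hΩ : IsOpen Ω) (hC : IsOpen C)
    (hconv : Convex ℝ C) (hne : C.Nonempty) (hsub : closure C ⊆ Ω) {x : Pt m}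
    (hx : x ∈ closure Ω) (hxC : x ∉ C) : x ∈ closure (Ω \ closure C) := by
  by_cases hxK : x ∈ closure C
  · have hint : interior (closure C) = C := by
      rw [hconv.interior_closure_eq_interior_of_nonempty_interior (by rwa [hC.interior_eq]),
        hC.interior_eq]
    have hx' : x ∈ closure ((closure C)ᶜ) := by
      rw [closure_compl, hint]
      exact hxC
    have := hΩ.inter_closure (t := (closure C)ᶜ) ⟨hsub hxK, hx'⟩
    rwa [← Set.sdiff_eq] at this
  · have := (isClosed_closure (s := C)).isOpen_compl.inter_closure (t := Ω) ⟨hxK, hx⟩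
    rwa [Set.inter_comm, ← Set.sdiff_eq] at this

/-- Tangent line inequality for the concave function `x ↦ x ^ α`: removing `p` of at most `N`
units saves at least `α * N ^ (α - 1) * p`. -/
lemma rpow_saving {α : ℝ} (h0 : 0 < α) (h1 : α ≤ 1) (p q N d : ℕ) (hN : p + q ≤ N)
    (hd : p + q ≤ d) :
    (q : ℝ) ^ α + α * (N : ℝ) ^ (α - 1) * p ≤ (d : ℝ) ^ α := by
  rcases Nat.eq_zero_or_pos p with rfl | hp
  · simp only [Nat.cast_zero, mul_zero, add_zero]
    exact Real.rpow_le_rpow (by positivity) (by exact_mod_cast (by omega : q ≤ d)) h0.le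
  have hT : (0 : ℝ) < (p : ℝ) + q := by positivity
  set T : ℝ := (p : ℝ) + q with hTdef
  have hTd : T ^ α ≤ (d : ℝ) ^ α :=
    Real.rpow_le_rpow hT.le (by rw [hTdef]; exact_mod_cast hd) h0.le
  have hTN : (N : ℝ) ^ (α - 1) ≤ T ^ (α - 1) :=
    Real.rpow_le_rpow_of_nonpos hT (by rw [hTdef]; exact_mod_cast hN) (by linarith)
  have hber := rpow_one_add_le_one_add_mul_self (s := (q : ℝ) / T - 1)
    (by have : (0 : ℝ) ≤ q / T := by positivity
        linarith) h0.le h1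
  have e1 : (1 + ((q : ℝ) / T - 1)) = q / T := by ring
  rw [e1, Real.div_rpow (by positivity) hT.le, div_le_iff₀ (by positivity)] at hber
  have e2 : T ^ α = T ^ (α - 1) * T := by
    rw [← Real.rpow_add_one hT.ne']
    ring_nf
  have e3 : (1 + α * ((q : ℝ) / T - 1)) * T ^ α = T ^ α - α * T ^ (α - 1) * p := by
    have : (q : ℝ) = T - p := by rw [hTdef]; ring
    rw [this, e2]
    field_simp
    ring
  rw [e3] at hber
  have : α * (N : ℝ) ^ (α - 1) * p ≤ α * T ^ (α - 1) * p := by gcongr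
  linarith

/-- There is a constant `κ_α > 0` depending only on `α` such that whenever `Ω ⊆ ℝ^m` is a
bounded open set, `Ω₁` is an open convex set with `cl Ω₁ ⊆ Ω`, `Ω₂ = Ω \ cl Ω₁`,
`A ⊆ Ω₁ ∪ Ω₂` is a finite nonempty set with `A₁ = A ∩ Ω₁`, `A₂ = A ∩ Ω₂`, and
`0 < μ₁ ≤ 1` satisfies `#A₁ ≥ μ₁·#A`, one has
`ℒ^α_brbd(A, ∂Ω) ≥ ℒ^α_brbd(A₁, ∂Ω₁) + ℒ^α_brbd(A₂, ∂Ω₂) + κ_α·μ₁·(#A)^α·dist(Ω₁, ∂Ω)`. -/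
theorem statement10 (α : ℝ) (hα0 : 0 < α) (hα1 : α ≤ 1) :
    ∃ κ : ℝ, 0 < κ ∧
      ∀ (m : ℕ) (Ω Ω₁ : Set (Pt m)) (A A₁ A₂ : Finset (Pt m)) (μ₁ : ℝ),
        IsOpen Ω → Bornology.IsBounded Ω →
        IsOpen Ω₁ → Convex ℝ Ω₁ → closure Ω₁ ⊆ Ω →
        (A : Set (Pt m)) ⊆ Ω₁ ∪ (Ω \ closure Ω₁) → A.Nonempty →
        (A₁ : Set (Pt m)) = (A : Set (Pt m)) ∩ Ω₁ →
        (A₂ : Set (Pt m)) = (A : Set (Pt m)) ∩ (Ω \ closure Ω₁) →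
        0 < μ₁ → μ₁ ≤ 1 → μ₁ * (A.card : ℝ) ≤ (A₁.card : ℝ) →
        Lbrbd m α A₁ Ω₁ + Lbrbd m α A₂ (Ω \ closure Ω₁) +
            ENNReal.ofReal (κ * μ₁ * (A.card : ℝ) ^ α * setDist Ω₁ (frontier Ω))
          ≤ Lbrbd m α A Ω := by
  refine ⟨α, hα0, ?_⟩
  intro m Ω Ω₁ A A₁ A₂ μ₁ hΩ _ hC hconv hsub hA hAne hA₁ hA₂ hμ0 _ hcard
  have hA₁A : A₁ ⊆ A := by
    rw [← Finset.coe_subset, hA₁]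
    exact Set.inter_subset_left
  have hA₁C : (A₁ : Set (Pt m)) ⊆ Ω₁ := hA₁ ▸ Set.inter_subset_right
  have hA₂O : (A₂ : Set (Pt m)) ⊆ Ω \ closure Ω₁ := hA₂ ▸ Set.inter_subset_right
  have hdiff : A \ A₁ = A₂ := by
    ext x
    have h1 : x ∈ A₁ ↔ x ∈ A ∧ x ∈ Ω₁ := by simpa using Set.ext_iff.mp hA₁ x
    have h2 : x ∈ A₂ ↔ x ∈ A ∧ x ∈ Ω \ closure Ω₁ := by simpa using Set.ext_iff.mp hA₂ x
    have h3 : x ∈ A → x ∈ Ω₁ ∨ x ∈ Ω \ closure Ω₁ := fun h => hA h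
    have h4 : x ∈ Ω₁ → x ∉ Ω \ closure Ω₁ := fun h h' => h'.2 (subset_closure h)
    rw [Finset.mem_sdiff]
    tauto
  have hcA : (0 : ℝ) < A.card := by exact_mod_cast hAne.card_pos
  have hCne : Ω₁.Nonempty := by
    have : (0 : ℝ) < A₁.card := lt_of_lt_of_le (mul_pos hμ0 hcA) hcard
    obtain ⟨x, hx⟩ := Finset.card_pos.mp (by exact_mod_cast this : 0 < A₁.card)
    exact ⟨x, hA₁C hx⟩
  have hAΩ : (A : Set (Pt m)) ⊆ Ω := fun x hx =>
    (hA hx).elim (fun h => hsub (subset_closure h)) fun h => h.1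
  refine le_iInf₂ fun G hG => ?_
  obtain ⟨hAV, hVcl, hEV, -, -, hK⟩ := hG
  have hbal : ∀ a ∉ frontier Ω, Bal G.E Prod.fst Prod.snd G.d A a := by
    intro a ha
    by_cases haV : a ∈ G.V
    · have := hK a haV ha
      rwa [Finset.sum_filter, Finset.sum_filter] at this
    · have e1 : ∀ e ∈ G.E, (if e.1 = a then G.d e else 0) = 0 := fun e he =>
        if_neg fun h : e.1 = a => haV (h ▸ (hEV e he).1)
      have e2 : ∀ e ∈ G.E, (if e.2 = a then G.d e else 0) = 0 := fun e he =>
        if_neg fun h : e.2 = a => haV (h ▸ (hEV e he).2.1)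
      unfold Bal
      rw [Finset.sum_eq_zero e1, Finset.sum_eq_zero e2, if_neg fun h => haV (hAV h)]
      rfl
  -- Flows with sources `A₁` and `A₂` whose multiplicities add up to at most those of `G`.
  obtain ⟨n₁, hn₁, hb₁⟩ := exists_subflow hbal A₁ hA₁A
  have hbal' : ∀ a ∉ frontier Ω,
      Bal G.E Prod.fst Prod.snd (fun e => G.d e - n₁ e) A₂ a := fun a ha =>
    hdiff ▸ (hbal a ha).sub (hb₁ a ha) hA₁A fun e he => (hn₁ e he).2
  obtain ⟨n₂, hn₂, hb₂⟩ := exists_subflow hbal' A₂ subset_rfl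
  have hcardA : A₁.card + A₂.card = A.card := by
    rw [← hdiff, add_comm]
    exact Finset.card_sdiff_add_card_eq_card hA₁A
  choose x y hlen hx hy hxy using fun e : Pt m × Pt m => exists_clip hC e.1 e.2
  have hfr : ∀ a ∈ Ω, a ∉ frontier Ω := fun a ha h => by
    rw [hΩ.frontier_eq] at h
    exact h.2 ha
  have hL₁ : Lbrbd m α A₁ Ω₁ ≤
      ENNReal.ofReal (∑ e ∈ G.E, (n₁ e : ℝ) ^ α * ‖y e - x e‖) := by
    refine Lbrbd_le_of_flow hα0 hα1 hC A₁ hA₁C G.E x y n₁ ?_ ?_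
    · intro e _ hne
      rcases hxy e with h | ⟨h, h'⟩
      · exact h
      · exact absurd (h.trans h'.symm) hne
    · intro a ha
      have := hb₁ a (hfr a (hsub (subset_closure ha)))
      unfold Bal at *
      simpa only [hx _ a ha, hy _ a ha] using this
  have hL₂ : Lbrbd m α A₂ (Ω \ closure Ω₁) ≤
      ENNReal.ofReal (∑ e ∈ G.E, (n₂ e : ℝ) ^ α * (‖x e - e.1‖ + ‖e.2 - y e‖)) := by
    have := Lbrbd_le_of_flow hα0 hα1 (hΩ.sdiff isClosed_closure) A₂ hA₂O
      (G.E.disjSum G.E) (Sum.elim Prod.fst y) (Sum.elim x Prod.snd) (Sum.elim n₂ n₂) ?_ ?_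
    · rw [Finset.sum_disjSum] at this
      simpa only [Sum.elim_inl, Sum.elim_inr, mul_add, Finset.sum_add_distrib] using this
    · have hcl : ∀ e ∈ G.E, e.1 ∈ closure Ω ∧ e.2 ∈ closure Ω := fun e he =>
        ⟨hVcl (hEV e he).1, hVcl (hEV e he).2.1⟩
      have hout : ∀ z ∈ closure Ω, z ∉ Ω₁ → z ∈ closure (Ω \ closure Ω₁) := fun z hz hz' =>
        mem_closure_outer hΩ hC hconv hCne hsub hz hz'
      rintro (e | e) he hne
      · have he : e ∈ G.E := by simpa using he
        simp only [Sum.elim_inl] at hne ⊢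
        refine ⟨hout _ (hcl e he).1 fun h => hne ((hx e _ h).mpr rfl).symm,
          hout _ ?_ fun h => hne ((hx e _ h).mp rfl)⟩
        rcases hxy e with h | h
        · exact subset_closure (hsub h.1)
        · exact h.1 ▸ (hcl e he).2
      · have he : e ∈ G.E := by simpa using he
        simp only [Sum.elim_inr] at hne ⊢
        refine ⟨hout _ ?_ fun h => hne ((hy e _ h).mp rfl).symm,
          hout _ (hcl e he).2 fun h => hne ((hy e _ h).mpr rfl)⟩
        rcases hxy e with h | h
        · exact subset_closure (hsub h.2)
        · exact h.2 ▸ (hcl e he).2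
    · intro a ha
      have := hb₂ a (hfr a ha.1)
      -- A cut point off `closure Ω₁` occurs only on an edge missing `Ω₁`, whose cut points agree.
      have hxye : ∀ e, x e = a ↔ y e = a := by
        intro e
        rcases hxy e with h | h
        · exact ⟨fun h' => absurd (h' ▸ h.1) ha.2, fun h' => absurd (h' ▸ h.2) ha.2⟩
        · rw [h.1, h.2]
      have hsum : (∑ e ∈ G.E, if x e = a then n₂ e else 0) =
          ∑ e ∈ G.E, if y e = a then n₂ e else 0 :=
        Finset.sum_congr rfl fun e _ => if_congr (hxye e) rfl rfl
      unfold Bal at *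
      rw [Finset.sum_disjSum, Finset.sum_disjSum]
      change (∑ e ∈ G.E, if e.1 = a then n₂ e else 0) +
          (∑ e ∈ G.E, if y e = a then n₂ e else 0) =
        (∑ e ∈ G.E, if x e = a then n₂ e else 0) +
          (∑ e ∈ G.E, if e.2 = a then n₂ e else 0) + if a ∈ A₂ then 1 else 0
      omega
  set δ := setDist Ω₁ (frontier Ω) with hδ
  have hδ0 : 0 ≤ δ := ENNReal.toReal_nonneg
  -- A `1`-Lipschitz potential, equal to `δ` on `closure Ω₁` and to `0` on `∂Ω`.
  set χ : Pt m → ℝ := fun a => max (δ - Metric.infDist a Ω₁) 0 with hχ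
  have hχK : ∀ a ∈ closure Ω₁, χ a = δ := fun a ha => by
    simp [hχ, Metric.infDist_zero_of_mem_closure ha, hδ0]
  have hχle : ∀ a, χ a ≤ δ := fun a =>
    max_le (by linarith [Metric.infDist_nonneg (x := a) (s := Ω₁)]) hδ0
  have hχlip : ∀ a b, χ a - χ b ≤ ‖b - a‖ := by
    intro a b
    have h1 : Metric.infDist b Ω₁ ≤ Metric.infDist a Ω₁ + dist b a :=
      Metric.infDist_le_infDist_add_dist
    rw [dist_eq_norm] at h1
    have h2 : δ - Metric.infDist b Ω₁ ≤ χ b := le_max_left _ _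
    have h3 : 0 ≤ χ b := le_max_right _ _
    have h4 : χ a ≤ ‖b - a‖ + χ b := max_le (by linarith) (by positivity)
    linarith
  have hflux : ∑ e ∈ G.E, (n₁ e : ℝ) * (χ e.1 - χ e.2) = A₁.card * δ := by
    rw [flow_potential hb₁ χ fun a ha => max_eq_right
      (by linarith [setDist_le_infDist hCne ha]),
      Finset.sum_congr rfl fun a ha => hχK a (subset_closure (hA₁C ha))]
    simp
  have hstep : ∀ e, χ e.1 - χ e.2 ≤ ‖x e - e.1‖ + ‖e.2 - y e‖ := by
    intro e
    rcases hxy e with h | h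
    · have h1 := hχlip (y e) e.2
      rw [hχK _ h.2] at h1
      linarith [hχle e.1, norm_nonneg (x e - e.1)]
    · rw [h.1, h.2]
      simpa using hχlip e.1 e.2
  set c : ℝ := α * (A.card : ℝ) ^ (α - 1) with hc
  have hc0 : 0 ≤ c := by positivity
  have hcost : (∑ e ∈ G.E, (n₁ e : ℝ) ^ α * ‖y e - x e‖) +
      (∑ e ∈ G.E, (n₂ e : ℝ) ^ α * (‖x e - e.1‖ + ‖e.2 - y e‖)) +
      c * (A₁.card * δ) ≤ G.cost α := by
    rw [← hflux, Finset.mul_sum, ← Finset.sum_add_distrib, ← Finset.sum_add_distrib]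
    refine Finset.sum_le_sum fun e he => ?_
    have h1 := hn₁ e he
    have h2 := hn₂ e he
    have h3 : (n₁ e : ℝ) ^ α ≤ (G.d e : ℝ) ^ α :=
      Real.rpow_le_rpow (by positivity) (by exact_mod_cast h1.2) hα0.le
    have h4 := rpow_saving hα0 hα1 (n₁ e) (n₂ e) A.card (G.d e) (by omega) (by omega)
    have h5 : c * ((n₁ e : ℝ) * (χ e.1 - χ e.2)) ≤
        c * n₁ e * (‖x e - e.1‖ + ‖e.2 - y e‖) := by
      rw [← mul_assoc]
      exact mul_le_mul_of_nonneg_left (hstep e) (by positivity)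
    calc _ ≤ (G.d e : ℝ) ^ α * ‖y e - x e‖ +
          ((n₂ e : ℝ) ^ α + c * n₁ e) * (‖x e - e.1‖ + ‖e.2 - y e‖) := by
          have := mul_le_mul_of_nonneg_right h3 (norm_nonneg (y e - x e))
          linarith
      _ ≤ (G.d e : ℝ) ^ α * ‖y e - x e‖ +
          (G.d e : ℝ) ^ α * (‖x e - e.1‖ + ‖e.2 - y e‖) := by gcongr
      _ = (G.d e : ℝ) ^ α * (‖x e - e.1‖ + ‖y e - x e‖ + ‖e.2 - y e‖) := by ring
      _ ≤ _ := mul_le_mul_of_nonneg_left (hlen e) (by positivity)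
  have hgain : α * μ₁ * (A.card : ℝ) ^ α * δ ≤ c * (A₁.card * δ) := by
    have e : (A.card : ℝ) ^ α = (A.card : ℝ) ^ (α - 1) * A.card := by
      rw [← Real.rpow_add_one hcA.ne']
      ring_nf
    calc α * μ₁ * (A.card : ℝ) ^ α * δ = c * (μ₁ * A.card * δ) := by rw [e, hc]; ring
      _ ≤ _ := by gcongr
  calc _ ≤ ENNReal.ofReal (∑ e ∈ G.E, (n₁ e : ℝ) ^ α * ‖y e - x e‖) +
        ENNReal.ofReal (∑ e ∈ G.E, (n₂ e : ℝ) ^ α * (‖x e - e.1‖ + ‖e.2 - y e‖)) +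
        ENNReal.ofReal (c * (A₁.card * δ)) :=
        add_le_add (add_le_add hL₁ hL₂) (ENNReal.ofReal_le_ofReal hgain)
    _ = ENNReal.ofReal _ := by
        rw [← ENNReal.ofReal_add (by positivity) (by positivity),
          ← ENNReal.ofReal_add (by positivity) (by positivity)]
    _ ≤ _ := ENNReal.ofReal_le_ofReal hcost

end
end

section
/- Let m ≥ 1 be an integer and α ∈ (1 − 1/m, 1]. There exists a constant C_α > 0 such that for every integer k ≥ 1 one has Λ_m^α(k) ≤ C_α · k^{mα}, i.e. Ξ_m^α(k) ≤ C_α. -/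
/-!
The bound is witnessed by an explicit dyadic forest whose vertices are the grid points themselves.

Write a grid point as `x / k` with `x ∈ {1, …, k}^m`; it lies on the boundary of the cube as soon as
some coordinate of `x` equals `k`.  The *level* of `x` is the largest `v` such that `2 ^ v` divides
every coordinate.  Every interior point `x` of level `v` sends a single edge to its *parent*, obtained
by rounding each coordinate up to the next multiple of `2 ^ (v + 1)`, truncated at `k`; this edge has
multiplicity `2 ^ (v m)`.

* Balance (`sum_children`): the children of an interior point `a` of level `v` are exactly the points
  `a - 2 ^ u • 1_s` with `u < v` and `s` a nonempty set of coordinates, and such a child has level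
  `u`.  They bring in `∑_{u < v} (2 ^ m - 1) 2 ^ (u m) = 2 ^ (v m) - 1`.
* Cost: there are at most `(k / 2 ^ u) ^ m` points of level `u`, each of whose edges has length at most
  `m 2 ^ u / k`.  Hence the cost is at most
  `m k ^ (m - 1) ∑_{2 ^ u ≤ k} (2 ^ u) ^ β` with `β = 1 + m α - m`.  The hypothesis `α > 1 - 1 / m`
  says exactly that `β > 0`, so this geometric sum is dominated by its last term, which is at most
  `k ^ β`, and the total is a constant times `k ^ (m - 1 + β) = k ^ (m α)`.
-/

open scoped ENNReal
open scoped Classical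

noncomputable section

/-- The open unit cube `(0,1)^m ⊆ ℝ^m`. -/
def unitCube (m : ℕ) : Set (Pt m) := {x | ∀ j, x j ∈ Set.Ioo (0 : ℝ) 1}

/-- The uniform grid `A_m^k = { (i₁/k, …, i_m/k) : i₁, …, i_m ∈ {1, …, k} }` of `k^m`
points. -/
def gridA (m k : ℕ) : Finset (Pt m) :=
  (Fintype.piFinset fun _ : Fin m => Finset.Icc 1 k).image
    fun I => (WithLp.equiv 2 (Fin m → ℝ)).symm fun j => (I j : ℝ) / k

/-- `Λ_m^α(k) = ℒ^α_brbd(A_m^k, ∂(0,1)^m)`. -/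
def LamGrid (m : ℕ) (α : ℝ) (k : ℕ) : ℝ≥0∞ := Lbrbd m α (gridA m k) (unitCube m)

/-- `Ξ_m^α(k) = k^{−mα} · Λ_m^α(k)`. -/
def XiGrid (m : ℕ) (α : ℝ) (k : ℕ) : ℝ≥0∞ :=
  ENNReal.ofReal ((k : ℝ) ^ (-((m : ℝ) * α))) * LamGrid m α k

/-! ### The dyadic forest on integer points -/

/-- The largest `v` such that `2 ^ v` divides every coordinate of `x` (meaningful when `x ≠ 0`). -/
def level {m : ℕ} (x : Fin m → ℕ) : ℕ := padicValNat 2 (Finset.univ.gcd x)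

/-- The parent of `x`: each coordinate is rounded up to a multiple of `2 ^ (level x + 1)` and then
truncated at `k`.  Since `2 ^ level x` divides every coordinate, rounding up amounts to adding
`2 ^ level x` to the coordinates that are not yet such a multiple. -/
def parent {m : ℕ} (k : ℕ) (x : Fin m → ℕ) : Fin m → ℕ :=
  fun j => min k (if 2 ^ (level x + 1) ∣ x j then x j else x j + 2 ^ level x)

/-- Integer coordinates of the grid points inside the open cube. -/
def interiorIdx (m k : ℕ) : Finset (Fin m → ℕ) := Fintype.piFinset fun _ => Finset.Ico 1 k

lemma mem_interiorIdx {m k : ℕ} {x : Fin m → ℕ} :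
    x ∈ interiorIdx m k ↔ ∀ j, 1 ≤ x j ∧ x j < k := by
  simp [interiorIdx]

lemma le_level {m : ℕ} (hm : 1 ≤ m) {x : Fin m → ℕ} (hx : ∀ j, 1 ≤ x j) (u : ℕ) :
    u ≤ level x ↔ ∀ j, 2 ^ u ∣ x j := by
  have h0 : Finset.univ.gcd x ≠ 0 := by
    intro h
    have := (Finset.gcd_eq_zero_iff.mp h) ⟨0, hm⟩ (Finset.mem_univ _)
    have := hx ⟨0, hm⟩
    omega
  rw [level, ← padicValNat_dvd_iff_le h0, Finset.dvd_gcd_iff]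
  simp

lemma dvd_of_level {m : ℕ} (hm : 1 ≤ m) {x : Fin m → ℕ} (hx : ∀ j, 1 ≤ x j) (j : Fin m) :
    2 ^ level x ∣ x j := (le_level hm hx _).1 le_rfl j

lemma exists_not_dvd {m : ℕ} (hm : 1 ≤ m) {x : Fin m → ℕ} (hx : ∀ j, 1 ≤ x j) :
    ∃ j, ¬ 2 ^ (level x + 1) ∣ x j := by
  by_contra! h
  have := (le_level hm hx _).2 h
  omega

lemma le_parent {m k : ℕ} {x : Fin m → ℕ} (hx : x ∈ interiorIdx m k) (j : Fin m) :
    x j ≤ parent k x j := by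
  have := (mem_interiorIdx.1 hx j).2
  unfold parent
  split_ifs <;> omega

lemma parent_le {m k : ℕ} (x : Fin m → ℕ) (j : Fin m) : parent k x j ≤ k :=
  min_le_left _ _

lemma parent_le_add {m k : ℕ} (x : Fin m → ℕ) (j : Fin m) :
    parent k x j ≤ x j + 2 ^ level x := by
  unfold parent
  split_ifs <;> omega

lemma parent_ne {m k : ℕ} (hm : 1 ≤ m) {x : Fin m → ℕ} (hx : x ∈ interiorIdx m k) :
    parent k x ≠ x := by
  intro h
  obtain ⟨j, hj⟩ := exists_not_dvd hm (fun j => (mem_interiorIdx.1 hx j).1)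
  have h1 := congrFun h j
  have h2 := (mem_interiorIdx.1 hx j).2
  have h3 : 0 < 2 ^ level x := by positivity
  simp only [parent, if_neg hj] at h1
  omega

lemma dvd_two_pow_round {v n : ℕ} (h : 2 ^ v ∣ n) (h' : ¬ 2 ^ (v + 1) ∣ n) :
    2 ^ (v + 1) ∣ n + 2 ^ v := by
  obtain ⟨c, rfl⟩ := h
  have hc : ¬ 2 ∣ c := fun hc => h' (by rw [pow_succ]; exact mul_dvd_mul_left _ hc)
  have : 2 ∣ c + 1 := by omega
  rw [show 2 ^ v * c + 2 ^ v = 2 ^ v * (c + 1) by ring, pow_succ]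
  exact mul_dvd_mul_left _ this

/-- For `p = (u, s)`, the point `a - 2 ^ u • 1_s`.  It is only used for `u < level a`, where
`2 ^ u < a j` and the truncated subtraction is the genuine one. -/
def child {m : ℕ} (a : Fin m → ℕ) (p : ℕ × Finset (Fin m)) : Fin m → ℕ :=
  fun j => if j ∈ p.2 then a j - 2 ^ p.1 else a j

lemma two_pow_succ_dvd {m k : ℕ} (hm : 1 ≤ m) {a : Fin m → ℕ} (ha : a ∈ interiorIdx m k)
    {u : ℕ} (hu : u < level a) (j : Fin m) : 2 ^ (u + 1) ∣ a j :=
  (le_level hm (fun j => (mem_interiorIdx.1 ha j).1) _).1 hu j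

lemma two_pow_lt {m k : ℕ} (hm : 1 ≤ m) {a : Fin m → ℕ} (ha : a ∈ interiorIdx m k)
    {u : ℕ} (hu : u < level a) (j : Fin m) : 2 ^ u < a j := by
  have h1 := Nat.le_of_dvd (mem_interiorIdx.1 ha j).1 (two_pow_succ_dvd hm ha hu j)
  have : 0 < 2 ^ u := by positivity
  rw [pow_succ] at h1
  omega

lemma child_mem {m k : ℕ} (hm : 1 ≤ m) {a : Fin m → ℕ} (ha : a ∈ interiorIdx m k)
    {u : ℕ} (hu : u < level a) (s : Finset (Fin m)) :
    child a (u, s) ∈ interiorIdx m k := by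
  rw [mem_interiorIdx]
  intro j
  have h1 := two_pow_lt hm ha hu j
  have h2 := mem_interiorIdx.1 ha j
  simp only [child]
  split_ifs
  · generalize 2 ^ u = t at *
    omega
  · omega

lemma dvd_child_iff {m k : ℕ} (hm : 1 ≤ m) {a : Fin m → ℕ} (ha : a ∈ interiorIdx m k)
    {u : ℕ} (hu : u < level a) {s : Finset (Fin m)} (j : Fin m) :
    2 ^ (u + 1) ∣ child a (u, s) j ↔ j ∉ s := by
  have h1 := two_pow_succ_dvd hm ha hu j
  have h2 := two_pow_lt hm ha hu j
  by_cases hj : j ∈ s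
  · simp only [child, hj, if_true, not_true, iff_false]
    intro h
    have h3 : 2 ^ (u + 1) ∣ 2 ^ u := by
      have := Nat.dvd_sub h1 h
      rwa [Nat.sub_sub_self h2.le] at this
    have := (Nat.pow_dvd_pow_iff_le_right (by norm_num)).1 h3
    omega
  · simp [child, hj, h1]

lemma level_child {m k : ℕ} (hm : 1 ≤ m) {a : Fin m → ℕ} (ha : a ∈ interiorIdx m k)
    {u : ℕ} (hu : u < level a) {s : Finset (Fin m)} (hs : s.Nonempty) :
    level (child a (u, s)) = u := by
  have hpos := fun j => (mem_interiorIdx.1 (child_mem hm ha hu s) j).1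
  apply le_antisymm
  · by_contra! h
    obtain ⟨j, hj⟩ := hs
    exact (dvd_child_iff hm ha hu j).1 ((le_level hm hpos (u + 1)).1 h j) hj
  · rw [le_level hm hpos]
    intro j
    have h1 : 2 ^ u ∣ a j := (pow_dvd_pow 2 (Nat.le_succ u)).trans (two_pow_succ_dvd hm ha hu j)
    simp only [child]
    split_ifs
    · exact Nat.dvd_sub h1 dvd_rfl
    · exact h1

lemma parent_child {m k : ℕ} (hm : 1 ≤ m) {a : Fin m → ℕ} (ha : a ∈ interiorIdx m k)
    {u : ℕ} (hu : u < level a) {s : Finset (Fin m)} (hs : s.Nonempty) :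
    parent k (child a (u, s)) = a := by
  funext j
  have h2 := two_pow_lt hm ha hu j
  have h3 := mem_interiorIdx.1 ha j
  simp only [parent, level_child hm ha hu hs, dvd_child_iff hm ha hu]
  by_cases hj : j ∈ s
  · simp only [child, hj, not_true, if_true, if_false]
    generalize 2 ^ u = t at *
    omega
  · simp only [child, hj, not_false_iff, if_true, if_false]
    omega

/-- Every child of an interior point `a` has the form `a - 2 ^ u • 1_s`: the truncation at `k` is not
active because all coordinates of `a` are smaller than `k`. -/
lemma eq_child {m k : ℕ} (hm : 1 ≤ m) {a : Fin m → ℕ} (ha : a ∈ interiorIdx m k)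
    {x : Fin m → ℕ} (hx : x ∈ interiorIdx m k) (h : parent k x = a) :
    level x < level a ∧
      x = child a (level x, Finset.univ.filter fun j => ¬ 2 ^ (level x + 1) ∣ x j) := by
  have key : ∀ j, a j = if 2 ^ (level x + 1) ∣ x j then x j else x j + 2 ^ level x := by
    intro j
    have h1 := congrFun h j
    have h2 := (mem_interiorIdx.1 ha j).2
    simp only [parent] at h1
    omega
  have hxpos := fun j => (mem_interiorIdx.1 hx j).1
  constructor
  · rw [← Nat.succ_le_iff, le_level hm (fun j => (mem_interiorIdx.1 ha j).1)]
    intro j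
    rw [key j]
    split_ifs with hd
    · exact hd
    · exact dvd_two_pow_round (dvd_of_level hm hxpos j) hd
  · funext j
    have h1 := key j
    simp only [child, Finset.mem_filter, Finset.mem_univ, true_and]
    split_ifs at h1 ⊢ <;> omega

/-- Kirchhoff's law at an interior point, in integer coordinates. -/
lemma sum_children {m k : ℕ} (hm : 1 ≤ m) {a : Fin m → ℕ} (ha : a ∈ interiorIdx m k) :
    ∑ x ∈ (interiorIdx m k).filter (fun x => parent k x = a), 2 ^ (level x * m) + 1 =
      2 ^ (level a * m) := by
  have h1 : ∑ p ∈ Finset.range (level a) ×ˢ (Finset.univ : Finset (Finset (Fin m))).erase ∅,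
      2 ^ (p.1 * m) =
      ∑ x ∈ (interiorIdx m k).filter (fun x => parent k x = a), 2 ^ (level x * m) := by
    refine Finset.sum_nbij (child a) ?_ ?_ ?_ ?_
    · rintro ⟨u, s⟩ hp
      simp only [Finset.mem_product, Finset.mem_range, Finset.mem_erase, Finset.mem_univ,
        and_true, ← Finset.nonempty_iff_ne_empty] at hp
      exact Finset.mem_filter.2 ⟨child_mem hm ha hp.1 s, parent_child hm ha hp.1 hp.2⟩
    · rintro ⟨u, s⟩ hp ⟨u', s'⟩ hp' h
      simp only [Finset.coe_product, Set.mem_prod, Finset.mem_coe, Finset.mem_range,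
        Finset.mem_erase, Finset.mem_univ, and_true, ← Finset.nonempty_iff_ne_empty] at hp hp'
      have hu : u = u' := by
        rw [← level_child hm ha hp.1 hp.2, h, level_child hm ha hp'.1 hp'.2]
      subst hu
      have hs : s = s' := by
        ext j
        rw [← not_iff_not, ← dvd_child_iff hm ha hp.1 j, h, dvd_child_iff hm ha hp'.1 j]
      rw [hs]
    · intro x hx
      obtain ⟨hx, hpx⟩ := Finset.mem_filter.1 (Finset.mem_coe.1 hx)
      obtain ⟨hlt, heq⟩ := eq_child hm ha hx hpx
      obtain ⟨j, hj⟩ := exists_not_dvd hm (fun j => (mem_interiorIdx.1 hx j).1)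
      refine ⟨(level x, Finset.univ.filter fun j => ¬ 2 ^ (level x + 1) ∣ x j), ?_, heq.symm⟩
      simp only [Finset.coe_product, Set.mem_prod, Finset.mem_coe, Finset.mem_range,
        Finset.mem_erase, Finset.mem_univ, and_true, ← Finset.nonempty_iff_ne_empty]
      exact ⟨hlt, ⟨j, by simpa using hj⟩⟩
    · rintro ⟨u, s⟩ hp
      simp only [Finset.mem_product, Finset.mem_range, Finset.mem_erase, Finset.mem_univ,
        and_true, ← Finset.nonempty_iff_ne_empty] at hp
      rw [level_child hm ha hp.1 hp.2]
  rw [← h1, Finset.sum_product]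
  have hcard : ((Finset.univ : Finset (Finset (Fin m))).erase ∅).card = 2 ^ m - 1 := by
    rw [Finset.card_erase_of_mem (Finset.mem_univ _)]
    simp
  simp only [Finset.sum_const, hcard, smul_eq_mul]
  generalize level a = v
  -- the telescoping sum `∑_{u < v} (2 ^ m - 1) 2 ^ (u m) = 2 ^ (v m) - 1`
  induction v with
  | zero => simp
  | succ v ih =>
    rw [Finset.sum_range_succ, add_right_comm, ih]
    have : 1 ≤ 2 ^ m := Nat.one_le_two_pow
    obtain ⟨c, hc⟩ := Nat.exists_eq_add_of_le this
    rw [Nat.succ_mul, pow_add, hc]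
    simp only [Nat.add_sub_cancel_left]
    ring

/-! ### The graph in the cube -/

/-- The grid point `x / k`. -/
def emb (m k : ℕ) (x : Fin m → ℕ) : Pt m :=
  (WithLp.equiv 2 (Fin m → ℝ)).symm fun j => (x j : ℝ) / k

lemma emb_apply {m k : ℕ} (x : Fin m → ℕ) (j : Fin m) : emb m k x j = (x j : ℝ) / k := rfl

lemma emb_injective {m k : ℕ} (hk : 1 ≤ k) : Function.Injective (emb m k) := by
  intro x y h
  have hk' : (k : ℝ) ≠ 0 := by positivity
  funext j
  have h1 : emb m k x j = emb m k y j := by rw [h]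
  rw [emb_apply, emb_apply, div_left_inj' hk'] at h1
  exact_mod_cast h1

/-- The edge from `x / k` to its parent. -/
def edgeOf (m k : ℕ) (x : Fin m → ℕ) : Pt m × Pt m := (emb m k x, emb m k (parent k x))

/-- The dyadic forest on the grid `gridA m k`.  The multiplicity of the edge leaving `x / k` is
`2 ^ (level x * m)`, the integer point `x` being recovered from the tail of the edge. -/
def gridGraph (m k : ℕ) : BrGraph m where
  V := gridA m k
  E := (interiorIdx m k).image (edgeOf m k)
  d := fun e => 2 ^ (level (Function.invFun (emb m k) e.1) * m)

lemma edgeOf_injective {m k : ℕ} (hk : 1 ≤ k) : Function.Injective (edgeOf m k) :=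
  fun _ _ h => emb_injective hk (Prod.ext_iff.1 h).1

lemma d_edgeOf {m k : ℕ} (hk : 1 ≤ k) (x : Fin m → ℕ) :
    (gridGraph m k).d (edgeOf m k x) = 2 ^ (level x * m) := by
  simp only [gridGraph, edgeOf, Function.leftInverse_invFun (emb_injective hk) x]

lemma mem_gridA {m k : ℕ} {p : Pt m} :
    p ∈ gridA m k ↔ ∃ x : Fin m → ℕ, (∀ j, 1 ≤ x j ∧ x j ≤ k) ∧ emb m k x = p := by
  simp [gridA, emb]

lemma gridA_subset_closure {m k : ℕ} (hk : 1 ≤ k) :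
    (gridA m k : Set (Pt m)) ⊆ closure (unitCube m) := by
  intro p hp
  obtain ⟨x, hx, rfl⟩ := mem_gridA.1 (Finset.mem_coe.1 hp)
  have hk' : (0 : ℝ) < k := by positivity
  have hpre : unitCube m =
      PiLp.homeomorph 2 (fun _ : Fin m => ℝ) ⁻¹' Set.univ.pi fun _ => Set.Ioo (0 : ℝ) 1 := by
    ext y
    simp [unitCube, PiLp.homeomorph, Set.mem_pi]
  rw [hpre, ← Homeomorph.preimage_closure, closure_pi_set]
  intro j _
  rw [closure_Ioo zero_ne_one]
  change emb m k x j ∈ _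
  rw [emb_apply]
  refine ⟨by positivity, ?_⟩
  rw [div_le_one hk']
  exact_mod_cast (hx j).2

lemma mem_interiorIdx_of_not_frontier {m k : ℕ} (hk : 1 ≤ k) {x : Fin m → ℕ}
    (hx : ∀ j, 1 ≤ x j ∧ x j ≤ k) (h : emb m k x ∉ frontier (unitCube m)) :
    x ∈ interiorIdx m k := by
  rw [mem_interiorIdx]
  intro j
  refine ⟨(hx j).1, lt_of_le_of_ne (hx j).2 fun hj => h ⟨?_, fun hi => ?_⟩⟩
  · exact gridA_subset_closure hk (Finset.mem_coe.2 (mem_gridA.2 ⟨x, hx, rfl⟩))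
  · have h1 := (interior_subset hi j).2
    have hk' : (k : ℝ) ≠ 0 := by positivity
    rw [emb_apply, hj, div_self hk'] at h1
    exact lt_irrefl _ h1

lemma gridGraph_isConn {m k : ℕ} (hm : 1 ≤ m) (hk : 1 ≤ k) :
    (gridGraph m k).IsConn (gridA m k) (unitCube m) := by
  have hmemV : ∀ x ∈ interiorIdx m k, emb m k x ∈ gridA m k := fun x hx =>
    mem_gridA.2 ⟨x, fun j => ⟨(mem_interiorIdx.1 hx j).1, (mem_interiorIdx.1 hx j).2.le⟩, rfl⟩
  have hpar : ∀ x ∈ interiorIdx m k, emb m k (parent k x) ∈ gridA m k := fun x hx =>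
    mem_gridA.2 ⟨_, fun j => ⟨(mem_interiorIdx.1 hx j).1.trans (le_parent hx j), parent_le x j⟩,
      rfl⟩
  refine ⟨subset_rfl, gridA_subset_closure hk, ?_, ?_, ?_, ?_⟩
  · intro e he
    obtain ⟨x, hx, rfl⟩ := Finset.mem_image.1 he
    exact ⟨hmemV x hx, hpar x hx, fun h => parent_ne hm hx (emb_injective hk h).symm⟩
  · -- the parent map increases coordinates and has no fixed point, hence has no two-cycle
    intro e he he'
    obtain ⟨x, hx, rfl⟩ := Finset.mem_image.1 he
    obtain ⟨y, hy, hxy⟩ := Finset.mem_image.1 he'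
    have h1 : y = parent k x := emb_injective hk (Prod.ext_iff.1 hxy).1
    have h2 : parent k y = x := emb_injective hk (Prod.ext_iff.1 hxy).2
    apply parent_ne hm hx
    funext j
    refine le_antisymm ?_ (le_parent hx j)
    rw [← h1]
    exact (le_parent hy j).trans_eq (congrFun h2 j)
  · intro e _
    exact Nat.one_le_two_pow
  · intro p hp hpf
    obtain ⟨a, ha, rfl⟩ := mem_gridA.1 hp
    have haI := mem_interiorIdx_of_not_frontier hk ha hpf
    have hout : ∑ e ∈ (gridGraph m k).E.filter (fun e => e.1 = emb m k a), (gridGraph m k).d e =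
        2 ^ (level a * m) := by
      rw [Finset.sum_filter, show (gridGraph m k).E = (interiorIdx m k).image (edgeOf m k) from rfl,
        Finset.sum_image (edgeOf_injective hk).injOn]
      simp only [d_edgeOf hk]
      simp only [edgeOf, (emb_injective hk).eq_iff]
      rw [Finset.sum_ite_eq' , if_pos haI]
    have hin : ∑ e ∈ (gridGraph m k).E.filter (fun e => e.2 = emb m k a), (gridGraph m k).d e =
        ∑ x ∈ (interiorIdx m k).filter (fun x => parent k x = a), 2 ^ (level x * m) := by
      rw [Finset.sum_filter, show (gridGraph m k).E = (interiorIdx m k).image (edgeOf m k) from rfl,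
        Finset.sum_image (edgeOf_injective hk).injOn, Finset.sum_filter]
      simp only [d_edgeOf hk]
      simp only [edgeOf, (emb_injective hk).eq_iff]
    rw [hout, hin, if_pos (show emb m k a ∈ gridA m k from hp), sum_children hm haI]

/-! ### The cost estimate -/

lemma norm_edge_le {m k : ℕ} (hk : 1 ≤ k) {x : Fin m → ℕ} (hx : x ∈ interiorIdx m k) :
    ‖emb m k (parent k x) - emb m k x‖ ≤ m * (2 ^ level x / k) := by
  have hk' : (0 : ℝ) < k := by positivity
  have hc : ∀ j, ‖(emb m k (parent k x) - emb m k x) j‖ ≤ 2 ^ level x / k := by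
    intro j
    have h1 : (x j : ℝ) ≤ parent k x j := by exact_mod_cast le_parent hx j
    have h2 : (parent k x j : ℝ) ≤ x j + 2 ^ level x := by exact_mod_cast parent_le_add x j
    rw [PiLp.sub_apply, emb_apply, emb_apply, ← sub_div, Real.norm_eq_abs,
      abs_of_nonneg (div_nonneg (by linarith) hk'.le)]
    gcongr
    linarith
  rw [EuclideanSpace.norm_eq, Real.sqrt_le_left (by positivity)]
  calc ∑ j, ‖(emb m k (parent k x) - emb m k x) j‖ ^ 2
      ≤ ∑ _j : Fin m, (2 ^ level x / k : ℝ) ^ 2 :=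
        Finset.sum_le_sum fun j _ => pow_le_pow_left₀ (norm_nonneg _) (hc j) 2
    _ = m * (2 ^ level x / k : ℝ) ^ 2 := by simp
    _ ≤ (m : ℝ) ^ 2 * (2 ^ level x / k : ℝ) ^ 2 := by
        gcongr
        exact_mod_cast Nat.le_self_pow two_ne_zero m
    _ = _ := by ring

lemma card_level_le {m k : ℕ} (hm : 1 ≤ m) (u : ℕ) :
    (((interiorIdx m k).filter fun x => level x = u).card : ℝ) ≤ ((k : ℝ) / 2 ^ u) ^ m := by
  have h1 : ((interiorIdx m k).filter fun x => level x = u) ⊆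
      Fintype.piFinset fun _ : Fin m => (Finset.Ioc 0 k).filter (2 ^ u ∣ ·) := by
    intro x hx
    obtain ⟨hxI, rfl⟩ := Finset.mem_filter.1 hx
    rw [Fintype.mem_piFinset]
    intro j
    have h := mem_interiorIdx.1 hxI j
    exact Finset.mem_filter.2 ⟨Finset.mem_Ioc.2 ⟨h.1, h.2.le⟩,
      dvd_of_level hm (fun j => (mem_interiorIdx.1 hxI j).1) j⟩
  have h2 := Finset.card_le_card h1
  rw [Fintype.card_piFinset] at h2
  simp only [Nat.Ioc_filter_dvd_card_eq_div, Finset.prod_const, Finset.card_univ,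
    Fintype.card_fin] at h2
  calc (((interiorIdx m k).filter fun x => level x = u).card : ℝ)
      ≤ (((k / 2 ^ u) ^ m : ℕ) : ℝ) := by exact_mod_cast h2
    _ = ((k / 2 ^ u : ℕ) : ℝ) ^ m := by push_cast; rfl
    _ ≤ ((k : ℝ) / 2 ^ u) ^ m := by
        gcongr
        simpa using (Nat.cast_div_le (α := ℝ) (m := k) (n := 2 ^ u))

lemma level_lt {m k : ℕ} (hm : 1 ≤ m) {x : Fin m → ℕ} (hx : x ∈ interiorIdx m k) :
    level x < Nat.log 2 k + 1 := by
  have h := mem_interiorIdx.1 hx ⟨0, hm⟩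
  have h1 := Nat.le_of_dvd h.1 (dvd_of_level hm (fun j => (mem_interiorIdx.1 hx j).1) ⟨0, hm⟩)
  exact Nat.lt_succ_of_le (Nat.le_log_of_pow_le (by norm_num) (h1.trans h.2.le))

lemma cost_gridGraph_le {m k : ℕ} (hm : 1 ≤ m) (hk : 1 ≤ k) {α β : ℝ}
    (hβ : β = 1 + m * α - m) :
    (gridGraph m k).cost α ≤
      m * (k : ℝ) ^ ((m : ℝ) - 1) * ∑ u ∈ Finset.range (Nat.log 2 k + 1), ((2 : ℝ) ^ β) ^ u := by
  have hk' : (0 : ℝ) < k := by positivity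
  have hcost : (gridGraph m k).cost α = ∑ x ∈ interiorIdx m k,
      ((2 ^ (level x * m) : ℕ) : ℝ) ^ α * ‖emb m k (parent k x) - emb m k x‖ := by
    rw [BrGraph.cost, show (gridGraph m k).E = (interiorIdx m k).image (edgeOf m k) from rfl,
      Finset.sum_image (edgeOf_injective hk).injOn]
    simp only [d_edgeOf hk]
    rfl
  set g : ℕ → ℝ := fun u => ((2 ^ (u * m) : ℕ) : ℝ) ^ α * (m * (2 ^ u / k)) with hg
  -- total contribution of level `u`
  have hterm : ∀ u, ((k : ℝ) / 2 ^ u) ^ m * g u =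
      m * (k : ℝ) ^ ((m : ℝ) - 1) * ((2 : ℝ) ^ β) ^ u := by
    intro u
    have e1 : ((2 ^ (u * m) : ℕ) : ℝ) ^ α = (2 : ℝ) ^ (u * m * α) := by
      push_cast
      rw [← Real.rpow_natCast, ← Real.rpow_mul (by norm_num)]
      push_cast
      rfl
    have e2 : ((2 : ℝ) ^ β) ^ u = 2 ^ (u * m * α) * 2 ^ u / (2 ^ u) ^ m := by
      rw [← pow_mul, ← Real.rpow_natCast, ← Real.rpow_natCast, ← Real.rpow_natCast,
        ← Real.rpow_mul (by norm_num), ← Real.rpow_add (by norm_num),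
        ← Real.rpow_sub (by norm_num), hβ]
      congr 1
      push_cast
      ring
    rw [hg, e2, Real.rpow_sub_one hk'.ne', Real.rpow_natCast, div_pow]
    simp only [e1]
    ring
  calc (gridGraph m k).cost α ≤ ∑ x ∈ interiorIdx m k, g (level x) := by
        rw [hcost]
        refine Finset.sum_le_sum fun x hx => ?_
        exact mul_le_mul_of_nonneg_left (norm_edge_le hk hx) (by positivity)
    _ = ∑ u ∈ Finset.range (Nat.log 2 k + 1),
          ∑ _x ∈ (interiorIdx m k).filter (fun x => level x = u), g u :=
        (Finset.sum_fiberwise_of_maps_to'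
          (fun x hx => Finset.mem_range.2 (level_lt hm hx)) g).symm
    _ ≤ ∑ u ∈ Finset.range (Nat.log 2 k + 1), ((k : ℝ) / 2 ^ u) ^ m * g u := by
        refine Finset.sum_le_sum fun u _ => ?_
        rw [Finset.sum_const, nsmul_eq_mul]
        exact mul_le_mul_of_nonneg_right (card_level_le hm u) (by positivity)
    _ = _ := by rw [Finset.mul_sum]; exact Finset.sum_congr rfl fun u _ => hterm u

/-- For `β > 0` the geometric sum over `2 ^ u ≤ k` is at most a constant times its last term, and the
last term is at most `k ^ β`. -/
lemma dyadic_sum_le {k : ℕ} (hk : 1 ≤ k) {β : ℝ} (hβ : 0 < β) :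
    ∑ u ∈ Finset.range (Nat.log 2 k + 1), ((2 : ℝ) ^ β) ^ u ≤
      2 ^ β / (2 ^ β - 1) * (k : ℝ) ^ β := by
  have hr : (1 : ℝ) < 2 ^ β := Real.one_lt_rpow (by norm_num) hβ
  have hlog : ((2 : ℝ) ^ β) ^ Nat.log 2 k ≤ (k : ℝ) ^ β := by
    rw [← Real.rpow_natCast, ← Real.rpow_mul (by norm_num), mul_comm, Real.rpow_mul (by norm_num),
      Real.rpow_natCast]
    refine Real.rpow_le_rpow (by positivity) ?_ hβ.le
    exact_mod_cast Nat.pow_log_le_self 2 (by omega)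
  rw [geom_sum_eq hr.ne', div_mul_eq_mul_div, pow_succ']
  gcongr
  nlinarith


/-- For `m ≥ 1` and `α ∈ (1 − 1/m, 1]` there is a constant `C_α > 0` with
`Λ_m^α(k) ≤ C_α · k^{mα}`, i.e. `Ξ_m^α(k) ≤ C_α`, for every integer `k ≥ 1`. -/
theorem statement12 (m : ℕ) (hm : 1 ≤ m) (α : ℝ)
    (hαl : 1 - 1 / (m : ℝ) < α) (hα1 : α ≤ 1) :
    ∃ C : ℝ, 0 < C ∧ ∀ k : ℕ, 1 ≤ k →
      LamGrid m α k ≤ ENNReal.ofReal (C * (k : ℝ) ^ ((m : ℝ) * α)) ∧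
      XiGrid m α k ≤ ENNReal.ofReal C := by
  set β : ℝ := 1 + m * α - m with hβ
  have hm' : (0 : ℝ) < m := by positivity
  have hβ0 : 0 < β := by
    have := mul_lt_mul_of_pos_left hαl hm'
    rw [mul_sub, mul_one, mul_one_div_cancel hm'.ne'] at this
    linarith
  have hr : (1 : ℝ) < 2 ^ β := Real.one_lt_rpow (by norm_num) hβ0
  have hC : (0 : ℝ) < m * (2 ^ β / (2 ^ β - 1)) :=
    mul_pos hm' (div_pos (by linarith) (by linarith))
  refine ⟨m * (2 ^ β / (2 ^ β - 1)), hC, fun k hk => ?_⟩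
  have hk' : (0 : ℝ) < k := by positivity
  have hcost : (gridGraph m k).cost α ≤
      m * (2 ^ β / (2 ^ β - 1)) * (k : ℝ) ^ ((m : ℝ) * α) := by
    refine (cost_gridGraph_le hm hk hβ).trans ?_
    calc (m : ℝ) * (k : ℝ) ^ ((m : ℝ) - 1) *
          ∑ u ∈ Finset.range (Nat.log 2 k + 1), ((2 : ℝ) ^ β) ^ u
        ≤ m * (k : ℝ) ^ ((m : ℝ) - 1) * (2 ^ β / (2 ^ β - 1) * (k : ℝ) ^ β) := by
          gcongr
          exact dyadic_sum_le hk hβ0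
      _ = m * (2 ^ β / (2 ^ β - 1)) * ((k : ℝ) ^ ((m : ℝ) - 1) * (k : ℝ) ^ β) := by ring
      _ = _ := by
          rw [← Real.rpow_add hk', hβ]
          ring_nf
  have hLam : LamGrid m α k ≤
      ENNReal.ofReal (m * (2 ^ β / (2 ^ β - 1)) * (k : ℝ) ^ ((m : ℝ) * α)) :=
    (iInf₂_le (gridGraph m k) (gridGraph_isConn hm hk)).trans (ENNReal.ofReal_le_ofReal hcost)
  refine ⟨hLam, ?_⟩
  calc XiGrid m α k ≤ ENNReal.ofReal ((k : ℝ) ^ (-((m : ℝ) * α))) *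
        ENNReal.ofReal (m * (2 ^ β / (2 ^ β - 1)) * (k : ℝ) ^ ((m : ℝ) * α)) := by
        unfold XiGrid
        gcongr
    _ = ENNReal.ofReal (m * (2 ^ β / (2 ^ β - 1))) := by
        rw [← ENNReal.ofReal_mul (by positivity), mul_left_comm, ← Real.rpow_add hk']
        simp

end
end
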